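/- arXiv:2412.10862 — 4 statements merged into one kernel-verified Lean document; each statement's English description precedes it below -/
import Mathlib

section
/- For any spinor κ ∈ ℂ² (regarded as a 2×1 complex matrix) and any A ∈ SL(2,ℂ), the following identity of 2×2 matrices holds, where each parenthesized 1×1 matrix product is regarded as a complex scalar: (A κ κᵀ J A* + A J conj(κ) κ* A*) · (κ* A* A κ) = (A κ κᵀ Aᵀ J + J conj(A) conj(κ) κ* A*) · (κ* κ) + (A κ κ* A*) · (κᵀ J A* A κ + κ* A* A J conj(κ)). -/
open Matrix

/-- The matrix J = [[0, i], [−i, 0]]. -/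
def Jmat : Matrix (Fin 2) (Fin 2) ℂ := !![0, Complex.I; -Complex.I, 0]

/-!
Put `u = Aκ`, `v = A J conj κ` and `w = J conj u`. Since `w w* = J (u u*)ᵀ J` is the adjugate of
`u u*`, the 2×2 Cayley–Hamilton identity `M + adj M = tr M` reads `u u* + w w* = (u* u) 1`, so
`(u* u) v = (u* v) u + (w* v) w`. Here `w* v = κᵀ (Aᵀ J A) J conj κ = det A (κ* κ)`, because
`Aᵀ J A = det A J` and `J² = 1`. Multiplying by `u*` on the right and adding the conjugate
transpose gives the identity, as `κᵀ J A* = v*` and `κᵀ Aᵀ J = w*`.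
-/

section MatrixLemmas

variable {m n R : Type*}

theorem add_adjugate_fin_two [CommRing R] (M : Matrix (Fin 2) (Fin 2) R) :
    M + M.adjugate = M.trace • 1 := by
  rw [adjugate_fin_two, trace_fin_two]
  ext i j
  fin_cases i <;> fin_cases j <;> simp [add_comm]

theorem mul_fin_one [NonUnitalCommSemiring R] (M : Matrix m (Fin 1) R)
    (S : Matrix (Fin 1) (Fin 1) R) : M * S = S 0 0 • M := by
  ext i j
  simp [Matrix.mul_apply, Subsingleton.elim j 0, mul_comm]

theorem star_conjTranspose_mul_apply [Fintype m] [NonUnitalSemiring R] [StarRing R]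
    (M N : Matrix m n R) (i j : n) : star ((Mᴴ * N) i j) = (Nᴴ * M) j i := by
  rw [← conjTranspose_apply, conjTranspose_mul, conjTranspose_conjTranspose]

end MatrixLemmas

section Jmat

theorem Jmat_isHermitian : Jmat.IsHermitian := by
  ext i j
  fin_cases i <;> fin_cases j <;> simp [Jmat]

theorem Jmat_mul_Jmat : Jmat * Jmat = 1 := by
  simp [Jmat, one_fin_two]

theorem Jmat_mul_transpose_mul_Jmat (A : Matrix (Fin 2) (Fin 2) ℂ) :
    Jmat * Aᵀ * Jmat = A.adjugate := by
  rw [Aᵀ.eta_fin_two, adjugate_fin_two]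
  simp [Jmat, mul_right_comm Complex.I _ Complex.I]

theorem transpose_mul_Jmat_mul_self (A : Matrix (Fin 2) (Fin 2) ℂ) :
    Aᵀ * Jmat * A = A.det • Jmat :=
  calc Aᵀ * Jmat * A
      = Jmat * (Jmat * Aᵀ * Jmat) * A := by
        simp only [← Matrix.mul_assoc, Jmat_mul_Jmat, Matrix.one_mul]
    _ = A.det • Jmat := by
        rw [Jmat_mul_transpose_mul_Jmat, Matrix.mul_assoc, adjugate_mul, Matrix.mul_smul,
          Matrix.mul_one]

end Jmat

/-- The antilinear map `κ ↦ J conj κ` on spinors, applied to each column of a matrix. It sends a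
spinor to one of the same length orthogonal to it. -/
def dualSpinor {n : Type*} (M : Matrix (Fin 2) n ℂ) : Matrix (Fin 2) n ℂ :=
  Jmat * M.map (starRingEnd ℂ)

section DualSpinor

variable {m n : Type*}

theorem conjTranspose_dualSpinor (M : Matrix (Fin 2) n ℂ) : (dualSpinor M)ᴴ = Mᵀ * Jmat := by
  rw [dualSpinor, conjTranspose_mul, Jmat_isHermitian.eq]
  congr 1
  ext i j
  simp

theorem dualSpinor_mul_conjTranspose_self [Fintype n] (M : Matrix (Fin 2) n ℂ) :
    dualSpinor M * (dualSpinor M)ᴴ = (M * Mᴴ).adjugate := by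
  rw [conjTranspose_dualSpinor, ← Jmat_mul_transpose_mul_Jmat, transpose_mul, dualSpinor]
  simp only [Matrix.mul_assoc]
  rfl

theorem mul_conjTranspose_add_dualSpinor_mul_conjTranspose [Fintype n]
    (M : Matrix (Fin 2) n ℂ) :
    M * Mᴴ + dualSpinor M * (dualSpinor M)ᴴ = (Mᴴ * M).trace • 1 := by
  rw [dualSpinor_mul_conjTranspose_self, add_adjugate_fin_two, trace_mul_comm]

theorem conjTranspose_dualSpinor_mul_mul_dualSpinor (A : Matrix (Fin 2) (Fin 2) ℂ)
    (M : Matrix (Fin 2) m ℂ) (N : Matrix (Fin 2) n ℂ) :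
    (dualSpinor (A * M))ᴴ * (A * dualSpinor N) = A.det • (Nᴴ * M)ᵀ :=
  calc (dualSpinor (A * M))ᴴ * (A * dualSpinor N)
      = Mᵀ * (Aᵀ * Jmat * A) * (Jmat * N.map (starRingEnd ℂ)) := by
        rw [conjTranspose_dualSpinor, transpose_mul, dualSpinor]
        simp only [Matrix.mul_assoc]
    _ = A.det • (Mᵀ * (Jmat * Jmat) * N.map (starRingEnd ℂ)) := by
        rw [transpose_mul_Jmat_mul_self]
        simp only [Matrix.mul_smul, smul_mul, Matrix.mul_assoc]
    _ = A.det • (Nᴴ * M)ᵀ := by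
        rw [Jmat_mul_Jmat, Matrix.mul_one, transpose_mul]
        rfl

theorem smul_eq_smul_add_smul_dualSpinor (u v : Matrix (Fin 2) (Fin 1) ℂ) :
    (uᴴ * u) 0 0 • v = (uᴴ * v) 0 0 • u + ((dualSpinor u)ᴴ * v) 0 0 • dualSpinor u :=
  calc (uᴴ * u) 0 0 • v
      = ((uᴴ * u).trace • (1 : Matrix (Fin 2) (Fin 2) ℂ)) * v := by
        rw [smul_mul, Matrix.one_mul, trace_fin_one]
    _ = u * (uᴴ * v) + dualSpinor u * ((dualSpinor u)ᴴ * v) := by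
        rw [← mul_conjTranspose_add_dualSpinor_mul_conjTranspose, Matrix.add_mul,
          Matrix.mul_assoc, Matrix.mul_assoc]
    _ = (uᴴ * v) 0 0 • u + ((dualSpinor u)ᴴ * v) 0 0 • dualSpinor u := by
        rw [mul_fin_one, mul_fin_one]

theorem smul_mul_conjTranspose_add_mul_conjTranspose (u v : Matrix (Fin 2) (Fin 1) ℂ) :
    (uᴴ * u) 0 0 • (u * vᴴ + v * uᴴ) =
      (vᴴ * dualSpinor u) 0 0 • (u * (dualSpinor u)ᴴ)
        + ((dualSpinor u)ᴴ * v) 0 0 • (dualSpinor u * uᴴ)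
        + (vᴴ * u + uᴴ * v) 0 0 • (u * uᴴ) := by
  have expand_vu : (uᴴ * u) 0 0 • (v * uᴴ) =
      (uᴴ * v) 0 0 • (u * uᴴ) + ((dualSpinor u)ᴴ * v) 0 0 • (dualSpinor u * uᴴ) := by
    rw [← smul_mul, smul_eq_smul_add_smul_dualSpinor, Matrix.add_mul, smul_mul, smul_mul]
  have expand_uv : (uᴴ * u) 0 0 • (u * vᴴ) =
      (vᴴ * u) 0 0 • (u * uᴴ) + (vᴴ * dualSpinor u) 0 0 • (u * (dualSpinor u)ᴴ) := by
    simpa only [conjTranspose_add, conjTranspose_smul, conjTranspose_mul,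
      conjTranspose_conjTranspose, star_conjTranspose_mul_apply]
      using congrArg conjTranspose expand_vu
  rw [smul_add, expand_vu, expand_uv, Matrix.add_apply]
  module

end DualSpinor

theorem crazy_identity_general (κ : Matrix (Fin 2) (Fin 1) ℂ) (A : Matrix (Fin 2) (Fin 2) ℂ) :
    ((κᴴ * Aᴴ * A * κ) 0 0) •
        (A * κ * κᵀ * Jmat * Aᴴ + A * Jmat * κ.map (starRingEnd ℂ) * κᴴ * Aᴴ) =
      ((κᴴ * κ) 0 0) •
          (star A.det • (A * κ * κᵀ * Aᵀ * Jmat)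
            + A.det •
              (Jmat * A.map (starRingEnd ℂ) * κ.map (starRingEnd ℂ) * κᴴ * Aᴴ))
        + ((κᵀ * Jmat * Aᴴ * A * κ + κᴴ * Aᴴ * A * Jmat * κ.map (starRingEnd ℂ)) 0 0) •
            (A * κ * κᴴ * Aᴴ) := by
  have dual_inner : ((dualSpinor (A * κ))ᴴ * (A * dualSpinor κ)) 0 0 =
      (κᴴ * κ) 0 0 * A.det := by
    rw [conjTranspose_dualSpinor_mul_mul_dualSpinor, Matrix.smul_apply, transpose_apply,
      smul_eq_mul, mul_comm]
  have inner_dual : ((A * dualSpinor κ)ᴴ * dualSpinor (A * κ)) 0 0 =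
      (κᴴ * κ) 0 0 * star A.det := by
    rw [← star_conjTranspose_mul_apply, dual_inner, star_mul', star_conjTranspose_mul_apply]
  have key := smul_mul_conjTranspose_add_mul_conjTranspose (A * κ) (A * dualSpinor κ)
  rw [dual_inner, inner_dual, conjTranspose_mul A (dualSpinor κ), conjTranspose_dualSpinor,
    conjTranspose_dualSpinor, SemigroupAction.mul_smul, SemigroupAction.mul_smul, ← smul_add] at key
  simpa only [dualSpinor, transpose_mul, conjTranspose_mul, Matrix.map_mul, ← Matrix.mul_assoc]
    using key

/-- Penrose–Rindler style identity: for a spinor κ (a 2×1 complex matrix) and A ∈ SL(2,ℂ),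
`(AκκᵀJA* + AJ conj(κ) κ*A*)·(κ*A*Aκ) = (AκκᵀAᵀJ + J conj(A) conj(κ) κ*A*)·(κ*κ)
  + (Aκκ*A*)·(κᵀJA*Aκ + κ*A*AJ conj(κ))`,
where each 1×1 matrix product is regarded as a complex scalar. -/
theorem crazy_identity (κ : Matrix (Fin 2) (Fin 1) ℂ) (A : Matrix (Fin 2) (Fin 2) ℂ)
    (hA : A.det = 1) :
    ((κᴴ * Aᴴ * A * κ) 0 0) •
        (A * κ * κᵀ * Jmat * Aᴴ + A * Jmat * κ.map (starRingEnd ℂ) * κᴴ * Aᴴ) =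
      ((κᴴ * κ) 0 0) •
          (A * κ * κᵀ * Aᵀ * Jmat
            + Jmat * A.map (starRingEnd ℂ) * κ.map (starRingEnd ℂ) * κᴴ * Aᴴ)
        + ((κᵀ * Jmat * Aᴴ * A * κ + κᴴ * Aᴴ * A * Jmat * κ.map (starRingEnd ℂ)) 0 0) •
            (A * κ * κᴴ * Aᴴ) := by
  simpa only [hA, star_one, one_smul] using crazy_identity_general κ A
end

section
/- Let κ₁, …, κ_d ∈ ℝ² ∖ {0} be real spinors, κ_i = (ξ_i, η_i), whose centres ξ_i/η_i ∈ ℝ ∪ {∞} are distinct and in order around ∂ℍ²; concretely, suppose η_i ≠ 0 for all i ≥ 2, the finite ratios satisfy ξ₂/η₂ > ξ₃/η₃ > ⋯ > ξ_d/η_d, and either η₁ = 0 or (η₁ ≠ 0 and ξ₁/η₁ > ξ₂/η₂). Then there exist signs ε₁, …, ε_d ∈ {+1, −1} such that for all i < j one has {ε_iκ_i, ε_jκ_j} = ε_iε_j(ξ_iη_j − ξ_jη_i) > 0. (This is the existence of spin-coherent planar spin decorations on horocycles with distinct in-order centres: the corresponding lambda lengths λ_{ij} are positive for i < j and negative for i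 > j.) -/
/-!
Choose the sign of each spinor so that `η > 0`, or `ξ > 0` when `η = 0`. If `η, η' > 0`, then
`{κ, κ'} = ηη' (ξ/η - ξ'/η')`, and if `η = 0 < η'`, then `{κ, κ'} = ξη' > 0`. So the inner product
of two spinors with these signs is positive exactly when the centre of the second lies below the
centre of the first, `∞` being above every finite centre.
-/

section Spinor

variable {R K : Type*} [CommRing R] [Field K]

/-- The antisymmetric inner product `{κ, κ'} = ξη' - ξ'η` of the spinors `κ = (ξ, η)` and
`κ' = (ξ', η')`. -/
def spinorInner (κ κ' : R × R) : R :=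
  κ.1 * κ'.2 - κ'.1 * κ.2

theorem spinorInner_smul_smul (a b : R) (κ κ' : R × R) :
    spinorInner (a • κ) (b • κ') = a * b * spinorInner κ κ' := by
  simp only [spinorInner, Prod.smul_fst, Prod.smul_snd, smul_eq_mul]
  ring

theorem spinorInner_eq_mul_div_sub_div {κ κ' : K × K} (hη : κ.2 ≠ 0) (hη' : κ'.2 ≠ 0) :
    spinorInner κ κ' = κ.2 * κ'.2 * (κ.1 / κ.2 - κ'.1 / κ'.2) := by
  simp only [spinorInner]
  field_simp

variable [LinearOrder K]

/-- The centre `ξ/η` of the horocycle of the spinor `(ξ, η)`. The boundary `K ∪ {∞}` is cut open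
at `∞`, which becomes the top element, so spinors whose centres are in order have strictly
decreasing centres. The zero spinor is given the centre `∞`. -/
def spinorCentre (κ : K × K) : WithTop K :=
  if κ.2 = 0 then ⊤ else ↑(κ.1 / κ.2)

theorem spinorCentre_of_snd_eq_zero {κ : K × K} (hη : κ.2 = 0) : spinorCentre κ = ⊤ :=
  if_pos hη

theorem spinorCentre_of_snd_ne_zero {κ : K × K} (hη : κ.2 ≠ 0) :
    spinorCentre κ = ↑(κ.1 / κ.2) :=
  if_neg hη

theorem spinorCentre_smul {c : K} (hc : c ≠ 0) (κ : K × K) :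
    spinorCentre (c • κ) = spinorCentre κ := by
  simp only [spinorCentre, Prod.smul_fst, Prod.smul_snd, smul_eq_mul, mul_eq_zero, hc, false_or,
    mul_div_mul_left _ _ hc]

theorem spinorCentre_lt_spinorCentre_iff {κ κ' : K × K} (hη' : κ'.2 ≠ 0) :
    spinorCentre κ' < spinorCentre κ ↔ κ.2 = 0 ∨ κ'.1 / κ'.2 < κ.1 / κ.2 := by
  rw [spinorCentre_of_snd_ne_zero hη']
  rcases eq_or_ne κ.2 0 with hη | hη
  · simp only [spinorCentre_of_snd_eq_zero hη, WithTop.coe_lt_top, hη, true_or]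
  · rw [spinorCentre_of_snd_ne_zero hη, WithTop.coe_lt_coe, or_iff_right hη]

theorem strictAnti_spinorCentre {ι : Type*} [PartialOrder ι] [OrderBot ι] {κ : ι → K × K}
    (hη : ∀ i, i ≠ ⊥ → (κ i).2 ≠ 0)
    (horder : ∀ i j, ⊥ < i → i < j → (κ j).1 / (κ j).2 < (κ i).1 / (κ i).2)
    (hbot : (κ ⊥).2 = 0 ∨ ∀ j, ⊥ < j → (κ j).1 / (κ j).2 < (κ ⊥).1 / (κ ⊥).2) :
    StrictAnti fun i ↦ spinorCentre (κ i) := by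
  intro i j hij
  refine (spinorCentre_lt_spinorCentre_iff (hη j hij.ne_bot)).2 ?_
  rcases eq_bot_or_bot_lt i with rfl | hi
  · exact hbot.imp_right fun h ↦ h j hij
  · exact .inr (horder i j hi hij)

/-- The choice of one spinor from each pair `±κ`: the one in the upper half-plane `η > 0`, or on
the positive `ξ`-axis if `η = 0`. -/
def IsPositiveSpinor (κ : K × K) : Prop :=
  0 < κ.2 ∨ κ.2 = 0 ∧ 0 < κ.1

variable [IsStrictOrderedRing K]

theorem isPositiveSpinor_or_isPositiveSpinor_neg {κ : K × K} (hκ : κ ≠ 0) :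
    IsPositiveSpinor κ ∨ IsPositiveSpinor (-κ) := by
  simp only [IsPositiveSpinor, Prod.fst_neg, Prod.snd_neg, neg_pos, neg_eq_zero]
  rcases lt_trichotomy κ.2 0 with hη | hη | hη
  · exact .inr (.inl hη)
  · have hξ : κ.1 ≠ 0 := fun hξ ↦ hκ (Prod.ext hξ hη)
    exact hξ.lt_or_gt.symm.imp (fun h ↦ .inr ⟨hη, h⟩) (fun h ↦ .inr ⟨hη, h⟩)
  · exact .inl (.inl hη)

theorem exists_sign_isPositiveSpinor_smul {κ : K × K} (hκ : κ ≠ 0) :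
    ∃ ε : K, (ε = 1 ∨ ε = -1) ∧ IsPositiveSpinor (ε • κ) := by
  rcases isPositiveSpinor_or_isPositiveSpinor_neg hκ with h | h
  · exact ⟨1, .inl rfl, by rwa [one_smul]⟩
  · exact ⟨-1, .inr rfl, by rwa [neg_one_smul]⟩

theorem IsPositiveSpinor.spinorInner_pos_iff {κ κ' : K × K} (hκ : IsPositiveSpinor κ)
    (hκ' : IsPositiveSpinor κ') :
    0 < spinorInner κ κ' ↔ spinorCentre κ' < spinorCentre κ := by
  rcases hκ' with hη' | ⟨hη', hξ'⟩
  · rw [spinorCentre_lt_spinorCentre_iff hη'.ne']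
    rcases hκ with hη | ⟨hη, hξ⟩
    · rw [spinorInner_eq_mul_div_sub_div hη.ne' hη'.ne', mul_pos_iff_of_pos_left (mul_pos hη hη'),
        sub_pos, or_iff_right hη.ne']
    · simp only [spinorInner, hη, mul_zero, sub_zero, mul_pos hξ hη', true_or]
  · have hη : 0 ≤ κ.2 := hκ.elim le_of_lt fun h ↦ h.1.ge
    have hinner : spinorInner κ κ' ≤ 0 := by
      simpa only [spinorInner, hη', mul_zero, zero_sub, neg_nonpos] using mul_nonneg hξ'.le hη
    rw [spinorCentre_of_snd_eq_zero hη']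
    exact iff_of_false hinner.not_gt not_top_lt

theorem spin_coherent_exists_general {ι : Type*} [Preorder ι] {κ : ι → K × K}
    (hne : ∀ i, κ i ≠ 0) (hcentre : StrictAnti fun i ↦ spinorCentre (κ i)) :
    ∃ ε : ι → K, (∀ i, ε i = 1 ∨ ε i = -1) ∧
      ∀ i j, i < j → 0 < ε i * ε j * spinorInner (κ i) (κ j) := by
  choose ε hsign hpos using fun i ↦ exists_sign_isPositiveSpinor_smul (hne i)
  have hε (i : ι) : ε i ≠ 0 := by
    rcases hsign i with h | h <;> simp [h]
  refine ⟨ε, hsign, fun i j hij ↦ ?_⟩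
  rw [← spinorInner_smul_smul, (hpos i).spinorInner_pos_iff (hpos j), spinorCentre_smul (hε j),
    spinorCentre_smul (hε i)]
  exact hcentre hij

end Spinor

/-- Existence of spin-coherent planar spin decorations: given real spinors κ₁, …, κ_d
(indexed here by `Fin (d+1)`, index 0 being κ₁) whose centres ξᵢ/ηᵢ ∈ ℝ ∪ {∞} are distinct
and in order around ∂ℍ² — concretely ηᵢ ≠ 0 for i ≥ 2, the finite ratios strictly decrease,
and either η₁ = 0 or ξ₁/η₁ exceeds all the other ratios — there exist signs εᵢ ∈ {±1} such
that `{εᵢκᵢ, εⱼκⱼ} = εᵢεⱼ(ξᵢηⱼ − ξⱼηᵢ) > 0` for all i < j. -/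
theorem spin_coherent_exists (d : ℕ) (κ : Fin (d+1) → ℝ × ℝ)
    (hne : ∀ i, κ i ≠ 0)
    (hη : ∀ i : Fin (d+1), i ≠ 0 → (κ i).2 ≠ 0)
    (horder : ∀ i j : Fin (d+1), 0 < i → i < j →
      (κ j).1 / (κ j).2 < (κ i).1 / (κ i).2)
    (hfirst : (κ 0).2 = 0 ∨ ((κ 0).2 ≠ 0 ∧ ∀ j : Fin (d+1), 0 < j →
      (κ j).1 / (κ j).2 < (κ 0).1 / (κ 0).2)) :
    ∃ ε : Fin (d+1) → ℝ, (∀ i, ε i = 1 ∨ ε i = -1) ∧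
      ∀ i j : Fin (d+1), i < j →
        0 < ε i * ε j * ((κ i).1 * (κ j).2 - (κ j).1 * (κ i).2) :=
  spin_coherent_exists_general hne (strictAnti_spinorCentre hη horder (hfirst.imp_right And.right))
end

section
/- For every κ ∈ ℂ² ∖ {0} (regarded as a 2×1 complex matrix), the three 2×2 Hermitian matrices κκ*, κκᵀJ + J·conj(κ)·κ*, and −i(κκᵀJ − J·conj(κ)·κ*) are linearly independent over ℝ. In particular, D_κf(Z(κ)) = κκᵀJ + J·conj(κ)·κ* is not a real multiple of f(κ) = κκ*. -/
open Matrix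

/-- A spinor κ = (ξ,η) ∈ ℂ² regarded as a column vector (2×1 complex matrix). -/
def toCol (κ : ℂ × ℂ) : Matrix (Fin 2) (Fin 1) ℂ := Matrix.of ![![κ.1], ![κ.2]]

/-!
Put `w = J κ̄` and group a vanishing combination of the three matrices, with coefficients `a, b, c`,
by left factor: `κ (a κ* + (b - ic) κᵀJ) + w ((b + ic) κ*) = 0`. Since `J` is skew-symmetric and
invertible, `w` is nonzero and orthogonal to `κ`, so `κ` and `w` are linearly independent over `ℂ`
and both right factors vanish. The second gives `b = c = 0`, and then the first gives `a = 0`.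
-/

section LinearIndependence

variable {R M : Type*} [Ring R] [AddCommGroup M] [Module R M] {x y z : M}

theorem linearIndependent_triple_iff :
    LinearIndependent R ![x, y, z] ↔
      ∀ a b c : R, a • x + b • y + c • z = 0 → a = 0 ∧ b = 0 ∧ c = 0 := by
  rw [Fintype.linearIndependent_iff]
  constructor
  · intro h a b c habc
    have hcoeff := h ![a, b, c] (by simpa [Fin.sum_univ_three] using habc)
    exact ⟨hcoeff 0, hcoeff 1, hcoeff 2⟩
  · intro h g hg
    simpa [Fin.forall_fin_succ] using
      h (g 0) (g 1) (g 2) (by simpa [Fin.sum_univ_three] using hg)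

theorem ne_smul_of_linearIndependent_triple [Nontrivial R]
    (h : LinearIndependent R ![x, y, z]) (t : R) : y ≠ t • x := by
  intro hy
  have hcoeff := linearIndependent_triple_iff.mp h t (-1) 0 (by simp [hy])
  exact one_ne_zero (neg_eq_zero.mp hcoeff.2.1)

end LinearIndependence

section RankOne

variable {m n ι R : Type*}

theorem mul_eq_vecMulVec_col_row [Unique ι] [NonUnitalNonAssocSemiring R]
    (A : Matrix m ι R) (B : Matrix ι n R) :
    A * B = vecMulVec (A.col default) (B.row default) := by
  ext i j
  simp [mul_apply, vecMulVec_apply]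

theorem eq_zero_of_vecMulVec_add_vecMulVec_eq_zero [CommRing R] {u w : m → R}
    (huw : LinearIndependent R ![u, w]) {p q : n → R}
    (h : vecMulVec u p + vecMulVec w q = 0) : p = 0 ∧ q = 0 := by
  have hcol (j : n) : p j = 0 ∧ q j = 0 := by
    refine LinearIndependent.pair_iff.mp huw _ _ (funext fun i => ?_)
    simpa [vecMulVec_apply, mul_comm] using congrFun₂ h i j
  exact ⟨funext fun j => (hcol j).1, funext fun j => (hcol j).2⟩

theorem linearIndependent_vecMulVec_triple {u w : m → ℂ} (huw : LinearIndependent ℂ ![u, w])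
    {x z : n → ℂ} (hx : x ≠ 0) (hz : z ≠ 0) (y : n → ℂ) :
    LinearIndependent ℝ
      ![vecMulVec u x, vecMulVec u y + vecMulVec w z,
        (-Complex.I) • (vecMulVec u y - vecMulVec w z)] := by
  rw [linearIndependent_triple_iff]
  intro a b c habc
  have hgroup : vecMulVec u ((a : ℂ) • x + (b - c * Complex.I) • y) +
      vecMulVec w ((b + c * Complex.I) • z) = 0 := by
    rw [← habc]
    ext i j
    simp only [Matrix.add_apply, Matrix.sub_apply, Matrix.smul_apply, vecMulVec_apply,
      Pi.add_apply, Pi.smul_apply, Complex.real_smul, smul_eq_mul]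
    ring
  obtain ⟨hp, hq⟩ := eq_zero_of_vecMulVec_add_vecMulVec_eq_zero huw hgroup
  have hbc : (b : ℂ) + c * Complex.I = 0 := (smul_eq_zero.mp hq).resolve_right hz
  have hb : b = 0 := by simpa using congrArg Complex.re hbc
  have hc : c = 0 := by simpa using congrArg Complex.im hbc
  have ha : a = 0 := by simpa [hb, hc, hx] using hp
  exact ⟨ha, hb, hc⟩

end RankOne

section SkewSymmetric

variable {n : Type*} [Fintype n]

theorem dotProduct_mulVec_self_of_transpose_eq_neg {R : Type*} [CommRing R] [NoZeroDivisors R]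
    [CharZero R] {J : Matrix n n R} (hJ : Jᵀ = -J) (v : n → R) : v ⬝ᵥ J *ᵥ v = 0 := by
  refine self_eq_neg.mp ?_
  calc v ⬝ᵥ J *ᵥ v = v ⬝ᵥ Jᵀ *ᵥ v := by rw [mulVec_transpose, dotProduct_mulVec, dotProduct_comm]
    _ = -(v ⬝ᵥ J *ᵥ v) := by rw [hJ, neg_mulVec, dotProduct_neg]

open scoped ComplexOrder in
theorem linearIndependent_pair_mulVec_star {𝕜 : Type*} [RCLike 𝕜] {J : Matrix n n 𝕜}
    (hJ : Jᵀ = -J) (hinj : Function.Injective J.mulVec) {v : n → 𝕜} (hv : v ≠ 0) :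
    LinearIndependent 𝕜 ![v, J *ᵥ star v] := by
  rw [LinearIndependent.pair_iff' hv]
  intro a hav
  have horth : a * (star v ⬝ᵥ v) = 0 := by
    rw [← smul_eq_mul, ← dotProduct_smul, hav, dotProduct_mulVec_self_of_transpose_eq_neg hJ]
  have ha : a = 0 := (mul_eq_zero.mp horth).resolve_right (dotProduct_star_self_eq_zero.not.mpr hv)
  have hJv : J *ᵥ star v = J *ᵥ 0 := by rw [← hav, ha, zero_smul, mulVec_zero]
  exact hv (star_eq_zero.mp (hinj hJv))

end SkewSymmetric

theorem flag_linear_independent_general {n ι : Type*} [Fintype n] [Unique ι]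
    {J : Matrix n n ℂ} (hJ : Jᵀ = -J) (hinj : Function.Injective J.mulVec)
    {κ : Matrix n ι ℂ} (hκ : κ ≠ 0) :
    LinearIndependent ℝ
      ![κ * κᴴ, κ * κᵀ * J + J * κ.map (starRingEnd ℂ) * κᴴ,
        (-Complex.I) • (κ * κᵀ * J - J * κ.map (starRingEnd ℂ) * κᴴ)] ∧
    ∀ t : ℝ, κ * κᵀ * J + J * κ.map (starRingEnd ℂ) * κᴴ ≠ t • (κ * κᴴ) := by
  have hcol : κ.col default ≠ 0 := fun h =>
    hκ (ext fun i j => by rw [Unique.eq_default j]; exact congrFun h i)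
  have hrow : κᴴ.row default ≠ 0 := star_ne_zero.mpr hcol
  have huw : LinearIndependent ℂ ![κ.col default, (J * κ.map (starRingEnd ℂ)).col default] :=
    linearIndependent_pair_mulVec_star hJ hinj hcol
  have hli := linearIndependent_vecMulVec_triple huw hrow hrow ((κᵀ * J).row default)
  simp only [← mul_eq_vecMulVec_col_row, ← Matrix.mul_assoc] at hli
  exact ⟨hli, ne_smul_of_linearIndependent_triple hli⟩

theorem toCol_ne_zero {κ : ℂ × ℂ} (hκ : κ ≠ 0) : toCol κ ≠ 0 := fun h =>
  hκ (Prod.ext (congrFun₂ h 0 0) (congrFun₂ h 1 0))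

theorem Jmat_transpose : Jmatᵀ = -Jmat := by
  ext i j
  fin_cases i <;> fin_cases j <;> simp [Jmat]

theorem Jmat_mulVec_injective : Function.Injective Jmat.mulVec :=
  mulVec_injective_of_isUnit ((isUnit_iff_isUnit_det _).mpr (by simp [Jmat, det_fin_two]))

/-- For κ ≠ 0, the Hermitian matrices κκ*, κκᵀJ + J·conj(κ)·κ*, −i(κκᵀJ − J·conj(κ)·κ*)
are linearly independent over ℝ. In particular D_κf(Z(κ)) = κκᵀJ + J·conj(κ)·κ* is not a
real multiple of f(κ) = κκ*. -/
theorem flag_linear_independent (κ : ℂ × ℂ) (hκ : κ ≠ 0) :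
    LinearIndependent ℝ
      ![toCol κ * (toCol κ)ᴴ,
        toCol κ * (toCol κ)ᵀ * Jmat + Jmat * (toCol κ).map (starRingEnd ℂ) * (toCol κ)ᴴ,
        (-Complex.I) •
          (toCol κ * (toCol κ)ᵀ * Jmat - Jmat * (toCol κ).map (starRingEnd ℂ) * (toCol κ)ᴴ)] ∧
    ∀ t : ℝ,
      toCol κ * (toCol κ)ᵀ * Jmat + Jmat * (toCol κ).map (starRingEnd ℂ) * (toCol κ)ᴴ ≠
        t • (toCol κ * (toCol κ)ᴴ) :=
  flag_linear_independent_general Jmat_transpose Jmat_mulVec_injective (toCol_ne_zero hκ)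
end

section
/- Let n = (T₀,X₀,Y₀,Z₀) ∈ ℝ⁴ lie on the positive light cone (⟨n,n⟩ = 0 and T₀ > 0) and let c ∈ ℝ. Then the lightlike affine 3-plane Π = {x ∈ ℝ^{1,3} : ⟨x,n⟩ = c} has nonempty intersection with the hyperboloid ℍ = {x = (T,X,Y,Z) ∈ ℝ^{1,3} : ⟨x,x⟩ = 1, T > 0} if and only if c > 0. -/
/-!
A point of the hyperboloid is timelike and a point of the light cone is causal, so the
Cauchy–Schwarz inequality makes their Minkowski product positive. Conversely, the plane spanned by
the lightlike vector `n` and its spatial reflection `n'` already contains a solution: the form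
restricts to `⟨a n + b n', a n + b n'⟩ = 2ab⟨n, n'⟩` and `⟨a n + b n', n⟩ = b⟨n, n'⟩`, so
`b = c / ⟨n, n'⟩` and `a = 1 / (2c)`.
-/

section BilinForm

variable {K V : Type*} [Field K] [AddCommGroup V] [Module K V]

theorem bilinForm_smul_add_smul_left_of_null (B : LinearMap.BilinForm K V)
    {n m : V} (hn : B n n = 0) (hmn : B m n ≠ 0) (a c : K) :
    B (a • n + (c / B m n) • m) n = c := by
  simp [hn, hmn]

theorem bilinForm_smul_add_smul_self_of_null [NeZero (2 : K)] {B : LinearMap.BilinForm K V}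
    (hB : B.IsSymm) {n m : V} (hn : B n n = 0) (hm : B m m = 0) (hmn : B m n ≠ 0)
    {c : K} (hc : c ≠ 0) :
    B ((2 * c)⁻¹ • n + (c / B m n) • m) ((2 * c)⁻¹ • n + (c / B m n) • m) = 1 := by
  have hnm : B n m = B m n := hB.eq n m
  simp only [map_add, map_smul, LinearMap.add_apply, LinearMap.smul_apply, smul_eq_mul, hn, hm,
    hnm]
  field_simp
  ring

end BilinForm

section Minkowski

variable (E : Type*) [SeminormedAddCommGroup E] [InnerProductSpace ℝ E]

/-- The Minkowski inner product `tt' - ⟪u, u'⟫` on spacetime `ℝ × E`, with `E` the space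
directions, as a bilinear form; `ℝ^{1,3}` is the case `E = ℝ³`. -/
noncomputable def minkowskiForm : LinearMap.BilinForm ℝ (ℝ × E) :=
  (LinearMap.mul ℝ ℝ).compl₁₂ (LinearMap.fst ℝ ℝ E) (LinearMap.fst ℝ ℝ E) -
    (innerₗ E).compl₁₂ (LinearMap.snd ℝ ℝ E) (LinearMap.snd ℝ ℝ E)

/-- The positive light cone `L⁺`: the nonzero future-directed null vectors. -/
def positiveLightCone : Set (ℝ × E) :=
  {n | minkowskiForm E n n = 0 ∧ 0 < n.1}

/-- The hyperboloid model `ℍ`: the future-directed unit timelike vectors. -/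
def hyperboloid : Set (ℝ × E) :=
  {x | minkowskiForm E x x = 1 ∧ 0 < x.1}

variable {E}

theorem minkowskiForm_apply (x y : ℝ × E) :
    minkowskiForm E x y = x.1 * y.1 - inner ℝ x.2 y.2 :=
  rfl

theorem minkowskiForm_self (x : ℝ × E) : minkowskiForm E x x = x.1 ^ 2 - ‖x.2‖ ^ 2 := by
  rw [minkowskiForm_apply, real_inner_self_eq_norm_sq, sq x.1]

theorem minkowskiForm_isSymm : (minkowskiForm E).IsSymm :=
  ⟨fun x y ↦ by simp [minkowskiForm_apply, mul_comm, real_inner_comm]⟩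

theorem norm_snd_eq_of_mem_positiveLightCone {n : ℝ × E} (hn : n ∈ positiveLightCone E) :
    ‖n.2‖ = n.1 := by
  have hsq : ‖n.2‖ ^ 2 = n.1 ^ 2 := by linarith [minkowskiForm_self n, hn.1]
  exact (pow_left_inj₀ (norm_nonneg _) hn.2.le two_ne_zero).mp hsq

theorem norm_snd_lt_of_mem_hyperboloid {x : ℝ × E} (hx : x ∈ hyperboloid E) : ‖x.2‖ < x.1 := by
  have hsq : ‖x.2‖ ^ 2 < x.1 ^ 2 := by linarith [minkowskiForm_self x, hx.1]
  exact lt_of_pow_lt_pow_left₀ 2 hx.2.le hsq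

theorem minkowskiForm_pos_of_timelike_of_causal {x n : ℝ × E} (hx : ‖x.2‖ < x.1)
    (hn : ‖n.2‖ ≤ n.1) (hn_pos : 0 < n.1) : 0 < minkowskiForm E x n := by
  rw [minkowskiForm_apply, sub_pos]
  calc inner ℝ x.2 n.2
    _ ≤ ‖x.2‖ * ‖n.2‖ := real_inner_le_norm _ _
    _ ≤ ‖x.2‖ * n.1 := by gcongr
    _ < x.1 * n.1 := by gcongr

theorem exists_mem_hyperboloid_of_null_pair {n m : ℝ × E} (hn : n ∈ positiveLightCone E)
    (hm : m ∈ positiveLightCone E) (hmn : 0 < minkowskiForm E m n) {c : ℝ} (hc : 0 < c) :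
    ∃ x ∈ hyperboloid E, minkowskiForm E x n = c := by
  refine ⟨(2 * c)⁻¹ • n + (c / minkowskiForm E m n) • m, ⟨?_, ?_⟩, ?_⟩
  · exact bilinForm_smul_add_smul_self_of_null minkowskiForm_isSymm hn.1 hm.1 hmn.ne' hc.ne'
  · have hn_pos := hn.2
    have hm_pos := hm.2
    simp only [Prod.fst_add, Prod.smul_fst, smul_eq_mul]
    positivity
  · exact bilinForm_smul_add_smul_left_of_null _ hn.1 hmn.ne' _ c

theorem mk_neg_snd_mem_positiveLightCone {n : ℝ × E} (hn : n ∈ positiveLightCone E) :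
    (n.1, -n.2) ∈ positiveLightCone E :=
  ⟨by simpa [minkowskiForm_self] using hn.1, hn.2⟩

theorem minkowskiForm_mk_neg_snd_pos {n : ℝ × E} (hn : 0 < n.1) :
    0 < minkowskiForm E (n.1, -n.2) n := by
  rw [minkowskiForm_apply, inner_neg_left, real_inner_self_eq_norm_sq, sub_neg_eq_add]
  positivity

theorem lightlike_plane_meets_hyperboloid_general {n : ℝ × E} (hn : n ∈ positiveLightCone E)
    (c : ℝ) : (∃ x ∈ hyperboloid E, minkowskiForm E x n = c) ↔ 0 < c := by
  constructor
  · rintro ⟨x, hx, rfl⟩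
    exact minkowskiForm_pos_of_timelike_of_causal (norm_snd_lt_of_mem_hyperboloid hx)
      (norm_snd_eq_of_mem_positiveLightCone hn).le hn.2
  · exact exists_mem_hyperboloid_of_null_pair hn (mk_neg_snd_mem_positiveLightCone hn)
      (minkowskiForm_mk_neg_snd_pos hn.2)

end Minkowski

theorem minkowskiForm_coordinates (T X Y Z T' X' Y' Z' : ℝ) :
    minkowskiForm (EuclideanSpace ℝ (Fin 3)) (T, !₂[X, Y, Z]) (T', !₂[X', Y', Z']) =
      T * T' - X * X' - Y * Y' - Z * Z' := by
  simp only [minkowskiForm_apply, PiLp.inner_apply, RCLike.inner_apply, Real.ringHom_apply,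
    Fin.sum_univ_three, Fin.isValue, Matrix.cons_val_zero, Matrix.cons_val_one, Matrix.cons_val]
  ring

theorem exists_spacetime_iff_exists_coordinates {p : ℝ × EuclideanSpace ℝ (Fin 3) → Prop} :
    (∃ x, p x) ↔ ∃ T X Y Z : ℝ, p (T, !₂[X, Y, Z]) := by
  refine ⟨fun ⟨⟨T, u⟩, hp⟩ ↦ ⟨T, u 0, u 1, u 2, ?_⟩, fun ⟨T, X, Y, Z, hp⟩ ↦ ⟨_, hp⟩⟩
  have hu : !₂[u 0, u 1, u 2] = u := by
    ext i
    fin_cases i <;> rfl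
  rwa [hu]

/-- Let n = (T₀,X₀,Y₀,Z₀) lie on the positive light cone and c ∈ ℝ. The lightlike 3-plane
{x : ⟨x,n⟩ = c} meets the hyperboloid ℍ = {x : ⟨x,x⟩ = 1, T > 0} iff c > 0. -/
theorem lightlike_plane_meets_hyperboloid (T₀ X₀ Y₀ Z₀ c : ℝ)
    (hT : 0 < T₀) (hnull : T₀^2 - X₀^2 - Y₀^2 - Z₀^2 = 0) :
    (∃ T X Y Z : ℝ, T^2 - X^2 - Y^2 - Z^2 = 1 ∧ 0 < T ∧
      T*T₀ - X*X₀ - Y*Y₀ - Z*Z₀ = c) ↔ 0 < c := by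
  have hn : (T₀, !₂[X₀, Y₀, Z₀]) ∈ positiveLightCone (EuclideanSpace ℝ (Fin 3)) :=
    ⟨by simpa only [minkowskiForm_coordinates, ← sq] using hnull, hT⟩
  simpa only [exists_spacetime_iff_exists_coordinates, hyperboloid, Set.mem_ofPred_eq,
    minkowskiForm_coordinates, ← sq, and_assoc]
    using lightlike_plane_meets_hyperboloid_general hn c
end
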